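/- The 1D aTAM is not intrinsically universal: there is no tile set U of 1-dimensional tile types, temperature τ' ∈ ℤ⁺, and computable functions ℛ and S such that for every 1D aTAM system 𝒯 there is m ∈ ℕ for which 𝒰_𝒯 = (U, S(𝒯), τ') simulates 𝒯 at scale m under ℛ(𝒯). -/

import Mathlib

open scoped Classical

noncomputable section

namespace ATAM

/-- A glue: a label (a finite string over the alphabet) together with a
nonnegative integer strength. -/
abbrev Glue : Type := String × ℕ

/-- A `d`-dimensional tile type: for each of the `d` axes, a glue on the
positive face and a glue on the negative face (`2d` glues in total). -/
abbrev TileType (d : ℕ) : Type := Fin d → Glue × Glue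

/-- Points of the integer lattice `ℤ^d`. -/
abbrev Pt (d : ℕ) : Type := Fin d → ℤ

/-- A configuration: a partial placement of tile types on `ℤ^d`. -/
abbrev Config (d : ℕ) : Type := Pt d → Option (TileType d)

variable {d : ℕ}

/-- The domain of a configuration. -/
def dom (α : Config d) : Set (Pt d) := {p | α p ≠ none}

/-- Grid-graph adjacency on `ℤ^d` (Euclidean, equivalently `ℓ¹`, distance one). -/
def adj (p q : Pt d) : Prop := (∑ i, |p i - q i|) = 1

/-- A set of lattice points is connected in the grid graph of `ℤ^d`. -/
def ConnectedSet (S : Set (Pt d)) : Prop :=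
  ∀ p ∈ S, ∀ q ∈ S,
    Relation.ReflTransGen (fun a b => adj a b ∧ a ∈ S ∧ b ∈ S) p q

/-- The strength with which a tile of type `t` at `p` and a tile of type `t'`
at `q` interact: nonzero only if `p` and `q` are adjacent and the abutting
glues are equal (in label and strength) with positive strength. -/
def bond (t t' : TileType d) (p q : Pt d) : ℕ :=
  ∑ i : Fin d,
    ((if q = Function.update p i (p i + 1) ∧ (t i).1 = (t' i).2 ∧ 0 < (t i).1.2
        then (t i).1.2 else 0) +
     (if p = Function.update q i (q i + 1) ∧ (t i).2 = (t' i).1 ∧ 0 < (t i).2.2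
        then (t i).2.2 else 0))

/-- The strength of the bond between positions `p` and `q` in configuration `α`. -/
def bondAt (α : Config d) (p q : Pt d) : ℕ :=
  match α p, α q with
  | some t, some t' => bond t t' p q
  | _, _ => 0

/-- `α` is `τ`-stable: every cut of its binding graph has weight at least `τ`. -/
def Stable (τ : ℕ) (α : Config d) : Prop :=
  ∀ A B : Set (Pt d), A.Nonempty → B.Nonempty → Disjoint A B → A ∪ B = dom α →
    ∃ F : Finset (Pt d × Pt d),
      (∀ e ∈ F, e.1 ∈ A ∧ e.2 ∈ B) ∧ τ ≤ ∑ e ∈ F, bondAt α e.1 e.2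

/-- `β` extends `α`, i.e. `α` is a subassembly of `β` (`α ⊑ β`). -/
def Extends (α β : Config d) : Prop := ∀ p t, α p = some t → β p = some t

/-- A `d`-dimensional tile assembly system `(T, σ, τ)`: a finite tile set, a
finite `τ`-stable seed assembly over the tile set, and a temperature `τ ≥ 1`. -/
structure TAS (d : ℕ) where
  tileset : Finset (TileType d)
  seed : Config d
  temp : ℕ
  temp_pos : 0 < temp
  seed_nonempty : (dom seed).Nonempty
  seed_connected : ConnectedSet (dom seed)
  seed_finite : (dom seed).Finite
  seed_tiles : ∀ p t, seed p = some t → t ∈ tileset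
  seed_stable : Stable temp seed

/-- One step of the (unrestricted) aTAM: a single tile of the tile set
`τ`-stably attaches at an empty location. -/
def Attach (T : TAS d) (α β : Config d) : Prop :=
  ∃ p t, p ∉ dom α ∧ t ∈ T.tileset ∧
    β = Function.update α p (some t) ∧ Stable T.temp β

/-- `q` lies outside the minimal bounding box of `α`. -/
def OutsideBBox (α : Config d) (q : Pt d) : Prop :=
  ∃ i : Fin d, (∀ p ∈ dom α, q i < p i) ∨ (∀ p ∈ dom α, p i < q i)

/-- There is a diffusion path for `p` with respect to `α`: a path in the grid
graph of `ℤ^d` from `p` to a point outside the minimal bounding box of `α`,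
none of whose points lies in `dom α`. -/
def HasDiffusionPath (α : Config d) (p : Pt d) : Prop :=
  ∃ (k : ℕ) (x : ℕ → Pt d), x 0 = p ∧ (∀ j < k, adj (x j) (x (j + 1))) ∧
    (∀ j ≤ k, x j ∉ dom α) ∧ OutsideBBox α (x k)

/-- One step of the diffusion-restricted aTAM: additionally the attachment
location must admit a diffusion path. -/
def AttachD (T : TAS d) (α β : Config d) : Prop :=
  ∃ p t, p ∉ dom α ∧ t ∈ T.tileset ∧ HasDiffusionPath α p ∧
    β = Function.update α p (some t) ∧ Stable T.temp β

/-- A (possibly stuttering) chain of single-tile attachment steps with respect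
to the attachment relation `A`. -/
def Chain (A : Config d → Config d → Prop) (f : ℕ → Config d) : Prop :=
  ∀ n, f n = f (n + 1) ∨ A (f n) (f (n + 1))

/-- `β` is the (limiting) result of the sequence `f`. -/
def Limit (f : ℕ → Config d) (β : Config d) : Prop :=
  ∀ p t, β p = some t ↔ ∃ n, f n p = some t

/-- `β` is producible from `α` by zero or more (possibly infinitely many)
single-tile attachment steps, with respect to the attachment relation `A`. -/
def ProducesFrom (A : Config d → Config d → Prop) (α β : Config d) : Prop :=
  ∃ f : ℕ → Config d, f 0 = α ∧ Chain A f ∧ Limit f β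

/-- `α` admits no attachment step: it is terminal. -/
def Terminal (A : Config d → Config d → Prop) (α : Config d) : Prop :=
  ∀ β, ¬ A α β

/-- The system with seed `σ` and attachment relation `A` is directed: it has
exactly one producible terminal assembly. -/
def DirectedSys (A : Config d → Config d → Prop) (σ : Config d) : Prop :=
  ∃! α, ProducesFrom A σ α ∧ Terminal A α

/-- The `m`-block macrotile of `α` at block position `x`. -/
def mblock (m : ℕ) (α : Config d) (x : Pt d) : Config d :=
  fun y => if ∀ i, 0 ≤ y i ∧ y i < (m : ℤ) then α (fun i => (m : ℤ) * x i + y i) else none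

/-- A (partial) macrotile representation function. -/
abbrev RepFn (d : ℕ) : Type := Config d → Option (TileType d)

/-- `R` is a valid macrotile representation function into the tile set `Tset`:
it is monotone with respect to the subassembly relation on macrotiles, and its
values are tile types of `Tset`. -/
def ValidRep (Tset : Finset (TileType d)) (R : RepFn d) : Prop :=
  (∀ γ γ', Extends γ γ' → ∀ t, R γ = some t → R γ' = some t) ∧
  (∀ γ t, R γ = some t → t ∈ Tset)

/-- The induced assembly representation function `R*`. -/
def repStar (R : RepFn d) (m : ℕ) (α' : Config d) : Config d :=
  fun x => R (mblock m α' x)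

/-- Block position `x` holds a nonempty `m`-block of `α'`. -/
def NonemptyBlock (m : ℕ) (α' : Config d) (x : Pt d) : Prop :=
  ∃ y, mblock m α' x y ≠ none

/-- `α'` maps cleanly to `R*(α')`: every nonempty block position lies in the
domain of `R*(α')` or is (non-diagonally) adjacent to a point of that domain,
or `α'` has at most one nonempty block. -/
def MapsCleanly (R : RepFn d) (m : ℕ) (α' : Config d) : Prop :=
  (∀ x, NonemptyBlock m α' x →
      repStar R m α' x ≠ none ∨ ∃ u, adj x u ∧ repStar R m α' u ≠ none) ∨
  (∃ x₀, ∀ x, NonemptyBlock m α' x → x = x₀)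

/-- The system with attachment relation `A_S` and seed `σ_S` simulates the
system with attachment relation `A_T` and seed `σ_T` at scale `m` under the
representation function `R`: they have equivalent productions, the simulated
system follows the simulator, and the simulator models the simulated system. -/
structure SimulatesVia (A_T : Config d → Config d → Prop) (σ_T : Config d)
    (A_S : Config d → Config d → Prop) (σ_S : Config d)
    (R : RepFn d) (m : ℕ) : Prop where
  /-- `{R*(α') : α' ∈ 𝒜[𝒮]} = 𝒜[𝒯]` -/
  prod_eq : ∀ α, ProducesFrom A_T σ_T α ↔
      ∃ α', ProducesFrom A_S σ_S α' ∧ repStar R m α' = α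
  /-- `{R*(α') : α' ∈ 𝒜□[𝒮]} = 𝒜□[𝒯]` -/
  term_eq : ∀ α, (ProducesFrom A_T σ_T α ∧ Terminal A_T α) ↔
      ∃ α', (ProducesFrom A_S σ_S α' ∧ Terminal A_S α') ∧ repStar R m α' = α
  /-- every producible assembly of the simulator maps cleanly -/
  clean : ∀ α', ProducesFrom A_S σ_S α' → MapsCleanly R m α'
  /-- `𝒯` follows `𝒮` -/
  follows : ∀ α' β', ProducesFrom A_S σ_S α' → ProducesFrom A_S σ_S β' →
      ProducesFrom A_S α' β' →
      ProducesFrom A_T (repStar R m α') (repStar R m β')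
  /-- `𝒮` models `𝒯` -/
  models : ∀ α, ProducesFrom A_T σ_T α → ∃ Ps : Set (Config d),
      (∀ α' ∈ Ps, ProducesFrom A_S σ_S α' ∧ repStar R m α' = α) ∧
      ∀ β, ProducesFrom A_T σ_T β → ProducesFrom A_T α β →
        (∀ α' ∈ Ps, ∃ β', ProducesFrom A_S α' β' ∧ repStar R m β' = β) ∧
        (∀ α'' β', ProducesFrom A_S σ_S α'' → repStar R m α'' = α →
            ProducesFrom A_S α'' β' → repStar R m β' = β →
            ∃ α' ∈ Ps, ProducesFrom A_S α' α'')

/-- `US` simulates `T` at scale `m` under `R`, both with the standard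
(unrestricted) aTAM dynamics. -/
def Simulates (US T : TAS d) (R : RepFn d) (m : ℕ) : Prop :=
  SimulatesVia (Attach T) T.seed (Attach US) US.seed R m

/-- `US` simulates `T` at scale `m` under `R`, both with the
diffusion-restricted dynamics. -/
def SimulatesD (US T : TAS d) (R : RepFn d) (m : ℕ) : Prop :=
  SimulatesVia (AttachD T) T.seed (AttachD US) US.seed R m

end ATAM

open ATAM

/-!
In dimension one a growing assembly remembers nothing but its end tiles. Hence, if a system with
`n` tile types grows an assembly covering `n + 1` consecutive positions east of its seed, some tile
type occurs there twice, and the growth between the two occurrences can be repeated for ever: the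
system produces assemblies reaching arbitrarily far east.

A simulator inherits this dichotomy. At scale `m`, clean mapping confines its seed to the blocks at
most one step beyond the simulated seed, so simulating an assembly that reaches `n + 2` positions
beyond the simulated seed forces it to cover more than `n` positions east of its own. That growth
can be pumped, and the pumped assemblies must in turn represent assemblies of the simulated system
reaching arbitrarily far east. But a line of `n + 3` pairwise distinct tiles stops where it ends.
-/

namespace ATAM

section Growth

variable {d : ℕ}

theorem mem_dom {α : Config d} {p : Pt d} : p ∈ dom α ↔ ∃ t, α p = some t :=
  Option.ne_none_iff_exists'

theorem dom_update_some (α : Config d) (p : Pt d) (t : TileType d) :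
    dom (Function.update α p (some t)) = insert p (dom α) := by
  ext q
  by_cases h : q = p <;> simp [dom, h]

theorem Extends.dom_subset {α β : Config d} (h : Extends α β) : dom α ⊆ dom β := by
  intro p hp
  obtain ⟨t, ht⟩ := mem_dom.1 hp
  exact mem_dom.2 ⟨t, h p t ht⟩

theorem Extends.antisymm {α β : Config d} (h : Extends α β) (h' : Extends β α) : α = β := by
  funext p
  exact Option.ext fun t => ⟨h p t, h' p t⟩

theorem extends_update_some {α : Config d} {p : Pt d} (hp : p ∉ dom α) (t : TileType d) :
    Extends α (Function.update α p (some t)) := by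
  intro q s hq
  have hqp : q ≠ p := by
    rintro rfl
    exact hp (mem_dom.2 ⟨s, hq⟩)
  rw [Function.update_of_ne hqp, hq]

theorem extends_of_attach {T : TAS d} {α β : Config d} (h : Attach T α β) : Extends α β := by
  obtain ⟨p, t, hp, -, rfl, -⟩ := h
  exact extends_update_some hp t

/-- `β` arises from `α` by finitely many attachments, as opposed to the possibly infinite
assembly sequences behind `ProducesFrom`. -/
abbrev FinitelyProduces (T : TAS d) : Config d → Config d → Prop :=
  Relation.ReflTransGen (Attach T)

namespace FinitelyProduces

variable {T : TAS d} {α β : Config d}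

theorem subassembly (h : FinitelyProduces T α β) : Extends α β := by
  induction h with
  | refl => exact fun _ _ h => h
  | tail _ hattach ih => exact fun p t h => extends_of_attach hattach p t (ih p t h)

theorem producesFrom (h : FinitelyProduces T α β) : ProducesFrom (Attach T) α β := by
  induction h using Relation.ReflTransGen.head_induction_on with
  | refl => exact ⟨fun _ => β, rfl, fun _ => Or.inl rfl, fun p t => by simp⟩
  | @head a _ hattach _ ih =>
    obtain ⟨f, rfl, hchain, hlimit⟩ := ih
    refine ⟨fun n => Nat.casesOn n a f, rfl, ?_, fun p t => (hlimit p t).trans ⟨?_, ?_⟩⟩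
    · rintro (_ | n)
      · exact Or.inr hattach
      · exact hchain n
    · rintro ⟨n, hn⟩
      exact ⟨n + 1, hn⟩
    · rintro ⟨_ | n, hn⟩
      · exact ⟨0, extends_of_attach hattach p t hn⟩
      · exact ⟨n, hn⟩

theorem stable (h : FinitelyProduces T T.seed α) : Stable T.temp α := by
  cases h with
  | refl => exact T.seed_stable
  | tail _ hattach =>
    obtain ⟨_, _, -, -, -, hstable⟩ := hattach
    exact hstable

theorem mem_tileset (h : FinitelyProduces T T.seed α) {p : Pt d} {t : TileType d}
    (ht : α p = some t) : t ∈ T.tileset := by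
  induction h with
  | refl => exact T.seed_tiles p t ht
  | tail _ hattach ih =>
    obtain ⟨q, s, -, hs, rfl, -⟩ := hattach
    by_cases hpq : p = q
    · subst hpq
      rw [Function.update_self, Option.some_inj] at ht
      exact ht ▸ hs
    · rw [Function.update_of_ne hpq] at ht
      exact ih ht

end FinitelyProduces

theorem Chain.finitelyProduces {T : TAS d} {f : ℕ → Config d} (h : Chain (Attach T) f) (n : ℕ) :
    FinitelyProduces T (f 0) (f n) := by
  induction n with
  | zero => exact .refl
  | succ n ih =>
    rcases h n with heq | hattach
    · rwa [← heq]
    · exact ih.tail hattach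

theorem producesFrom_refl (T : TAS d) (α : Config d) : ProducesFrom (Attach T) α α :=
  FinitelyProduces.producesFrom .refl

namespace ProducesFrom

variable {T : TAS d} {α β : Config d}

theorem subassembly (h : ProducesFrom (Attach T) α β) : Extends α β := by
  obtain ⟨f, rfl, -, hlimit⟩ := h
  exact fun p t ht => (hlimit p t).2 ⟨0, ht⟩

theorem exists_finitelyProduces (h : ProducesFrom (Attach T) α β) {p : Pt d} {t : TileType d}
    (ht : β p = some t) : ∃ γ, FinitelyProduces T α γ ∧ γ p = some t := by
  obtain ⟨f, rfl, hchain, hlimit⟩ := h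
  obtain ⟨n, hn⟩ := (hlimit p t).1 ht
  exact ⟨f n, hchain.finitelyProduces n, hn⟩

end ProducesFrom

end Growth

section Stability

variable {d : ℕ}

theorem bond_comm (t t' : TileType d) (p q : Pt d) : bond t t' p q = bond t' t q p := by
  refine Finset.sum_congr rfl fun i _ => ?_
  rw [add_comm]
  congr 1 <;> grind

theorem bondAt_comm (α : Config d) (p q : Pt d) : bondAt α p q = bondAt α q p := by
  unfold bondAt
  cases α p <;> cases α q <;> simp only [bond_comm]

theorem bondAt_of_eq_some {α : Config d} {p q : Pt d} {t t' : TileType d} (h : α p = some t)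
    (h' : α q = some t') : bondAt α p q = bond t t' p q := by
  simp only [bondAt, h, h']

theorem bondAt_update_of_ne (α : Config d) (t : Option (TileType d)) {p q r : Pt d} (hp : p ≠ r)
    (hq : q ≠ r) : bondAt (Function.update α r t) p q = bondAt α p q := by
  simp only [bondAt, Function.update_of_ne hp, Function.update_of_ne hq]

theorem exists_eq_some_of_bondAt_ne_zero {α : Config d} {p q : Pt d} (h : bondAt α p q ≠ 0) :
    ∃ t t', α p = some t ∧ α q = some t' := by
  unfold bondAt at h
  split at h
  · exact ⟨_, _, by assumption, by assumption⟩
  · exact absurd rfl h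

theorem stable_of_subsingleton_dom {α : Config d} (h : (dom α).Subsingleton) (τ : ℕ) :
    Stable τ α := by
  rintro A B ⟨a, ha⟩ ⟨b, hb⟩ hdisj hunion
  have hab : a = b := h (hunion ▸ Or.inl ha) (hunion ▸ Or.inr hb)
  exact absurd (hab ▸ hb) (Set.disjoint_left.1 hdisj ha)

theorem Stable.update_some {τ : ℕ} {α : Config d} (h : Stable τ α) {p q : Pt d}
    {t t' : TileType d} (ht : α p = some t) (hq : q ∉ dom α) (hbond : τ ≤ bond t t' p q) :
    Stable τ (Function.update α q (some t')) := by
  intro A B hA hB hdisj hunion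
  rw [dom_update_some] at hunion
  wlog hqB : q ∈ B generalizing A B
  · have hqA : q ∈ A := (hunion ▸ Set.mem_insert q _ : q ∈ A ∪ B).resolve_right hqB
    obtain ⟨F, hF, hsum⟩ := this B A hB hA hdisj.symm (Set.union_comm B A ▸ hunion) hqA
    refine ⟨F.map (Equiv.prodComm _ _).toEmbedding, ?_, ?_⟩
    · simp only [Finset.mem_map_equiv]
      exact fun e he => (hF _ he).symm
    · simpa [bondAt_comm] using hsum
  have hqA : q ∉ A := Set.disjoint_right.1 hdisj hqB
  have hunion' : A ∪ B \ {q} = dom α := by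
    rw [← Set.insert_sdiff_self_of_notMem hq, ← hunion, Set.union_sdiff_distrib,
      Set.sdiff_singleton_eq_self hqA]
  by_cases hB' : (B \ {q}).Nonempty
  · obtain ⟨F, hF, hsum⟩ := h A (B \ {q}) hA hB' (hdisj.mono_right Set.sdiff_subset) hunion'
    refine ⟨F, fun e he => ⟨(hF e he).1, (hF e he).2.1⟩, hsum.trans_eq ?_⟩
    refine Finset.sum_congr rfl fun e he => (bondAt_update_of_ne _ _ ?_ (hF e he).2.2).symm
    exact ne_of_mem_of_not_mem (hF e he).1 hqA
  · rw [Set.not_nonempty_iff_eq_empty] at hB'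
    rw [hB', Set.union_empty] at hunion'
    have hpA : p ∈ A := hunion' ▸ mem_dom.2 ⟨t, ht⟩
    refine ⟨{(p, q)}, by simpa using ⟨hpA, hqB⟩, ?_⟩
    rwa [Finset.sum_singleton, bondAt_of_eq_some (t := t) (t' := t')]
    · rw [Function.update_of_ne (ne_of_mem_of_not_mem hpA hqA), ht]
    · exact Function.update_self ..

end Stability

section Blocks

variable {d m : ℕ} {R : RepFn d} {α β : Config d}

theorem nonemptyBlock_iff (hm : 0 < m) {x : Pt d} :
    NonemptyBlock m α x ↔ ∃ q ∈ dom α, ∀ i, q i / m = x i := by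
  have hm' : (0 : ℤ) < m := by exact_mod_cast hm
  constructor
  · rintro ⟨y, hy⟩
    unfold mblock at hy
    split_ifs at hy with hbounds
    · refine ⟨_, hy, fun i => ?_⟩
      rw [Int.mul_add_ediv_left _ _ hm'.ne', Int.ediv_eq_zero_of_lt (hbounds i).1 (hbounds i).2,
        add_zero]
    · exact absurd rfl hy
  · rintro ⟨q, hq, hqx⟩
    refine ⟨fun i => q i % m, ?_⟩
    unfold mblock
    rw [if_pos fun i => ⟨Int.emod_nonneg _ hm'.ne', Int.emod_lt_of_pos _ hm'⟩]
    simp only [← hqx, Int.mul_ediv_add_emod]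
    exact hq

theorem Extends.mblock (h : Extends α β) (m : ℕ) (x : Pt d) :
    Extends (mblock m α x) (mblock m β x) := by
  intro y t hy
  unfold ATAM.mblock at hy ⊢
  split_ifs at hy ⊢
  exact h _ _ hy

theorem ValidRep.repStar_extends {Tset : Finset (TileType d)} (hR : ValidRep Tset R)
    (h : Extends α β) (m : ℕ) : Extends (repStar R m α) (repStar R m β) :=
  fun x => hR.1 _ _ (h.mblock m x)

theorem ValidRep.apply_empty_eq_none {Tset : Finset (TileType d)} (hR : ValidRep Tset R)
    {γ : Config d} (h : R γ = none) : R (fun _ => none) = none := by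
  rw [Option.eq_none_iff_forall_ne_some] at h ⊢
  exact fun t ht => h t (hR.1 _ γ (fun _ _ h => absurd h (Option.some_ne_none _).symm) t ht)

theorem nonemptyBlock_of_mem_dom_repStar (hR : R (fun _ => none) = none) {x : Pt d}
    (h : x ∈ dom (repStar R m α)) : NonemptyBlock m α x := by
  by_contra hempty
  unfold NonemptyBlock at hempty
  push Not at hempty
  exact h ((congrArg R (funext hempty)).trans hR)

theorem Simulates.repStar_seed {S T : TAS d} (h : Simulates S T R m)
    (hR : ValidRep T.tileset R) : repStar R m S.seed = T.seed := by
  apply Extends.antisymm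
  · obtain ⟨α', hα', heq⟩ := (h.prod_eq T.seed).1 (producesFrom_refl T _)
    exact heq ▸ hR.repStar_extends hα'.subassembly m
  · exact ((h.prod_eq _).2 ⟨S.seed, producesFrom_refl S _, rfl⟩).subassembly

theorem Simulates.apply_empty_eq_none {S T : TAS d} (h : Simulates S T R m)
    (hR : ValidRep T.tileset R) {x : Pt d} (hx : x ∉ dom T.seed) : R (fun _ => none) = none := by
  rw [← h.repStar_seed hR] at hx
  exact hR.apply_empty_eq_none (not_not.1 hx)

end Blocks

section OneDimensional

/-- The point of `ℤ^1` with coordinate `z`. -/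
def pt (z : ℤ) : Pt 1 := fun _ => z

@[simp] theorem pt_apply (z : ℤ) (i : Fin 1) : pt z i = z := rfl

@[simp] theorem pt_inj {a b : ℤ} : pt a = pt b ↔ a = b :=
  ⟨fun h => congrFun h 0, congrArg pt⟩

theorem exists_pt_eq (p : Pt 1) : ∃ z, pt z = p :=
  ⟨p 0, funext fun i => congrArg p (Subsingleton.elim 0 i)⟩

theorem update_eq_pt (p : Pt 1) (i : Fin 1) (z : ℤ) : Function.update p i z = pt z :=
  funext fun j => by rw [Subsingleton.elim j i, Function.update_self, pt_apply]

theorem adj_pt_iff {a b : ℤ} : adj (pt a) (pt b) ↔ |a - b| = 1 := by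
  simp [adj]

theorem nonemptyBlock_pt_iff {m : ℕ} (hm : 0 < m) {α : Config 1} {x : ℤ} :
    NonemptyBlock m α (pt x) ↔ ∃ q, pt q ∈ dom α ∧ q / m = x := by
  rw [nonemptyBlock_iff hm]
  constructor
  · rintro ⟨p, hp, hpx⟩
    obtain ⟨q, rfl⟩ := exists_pt_eq p
    exact ⟨q, hp, hpx 0⟩
  · rintro ⟨q, hq, hqx⟩
    exact ⟨pt q, hq, fun _ => hqx⟩

/-- A tile of type `t` binds with strength at least `τ` to a tile of type `t'` placed immediately
east of it. -/
def BindsEast (τ : ℕ) (t t' : TileType 1) : Prop :=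
  (t 0).1 = (t' 0).2 ∧ τ ≤ (t 0).1.2

theorem bond_pt_of_lt (t t' : TileType 1) {a b : ℤ} (hab : a < b) :
    bond t t' (pt a) (pt b) = if b = a + 1 ∧ (t 0).1 = (t' 0).2 then (t 0).1.2 else 0 := by
  have hba : a ≠ b + 1 := by omega
  simp only [bond, Fin.sum_univ_one, update_eq_pt, pt_apply, pt_inj, hba]
  grind

theorem le_bond_pt_add_one_iff {τ : ℕ} (hτ : 0 < τ) {t t' : TileType 1} {i : ℤ} :
    τ ≤ bond t t' (pt i) (pt (i + 1)) ↔ BindsEast τ t t' := by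
  rw [bond_pt_of_lt t t' (lt_add_one i), BindsEast]
  split_ifs <;> grind

theorem bondAt_pt_eq_zero (α : Config 1) {a b : ℤ} (hab : a + 1 < b) :
    bondAt α (pt a) (pt b) = 0 := by
  by_contra hne
  obtain ⟨t, t', ht, ht'⟩ := exists_eq_some_of_bondAt_ne_zero hne
  rw [bondAt_of_eq_some ht ht', bond_pt_of_lt t t' (by omega), if_neg (by omega)] at hne
  exact hne rfl

namespace Stable

variable {τ : ℕ} {α : Config 1} {x y i : ℤ}

/-- The only possible bond across the cut between `i` and `i + 1` is the one joining them. -/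
theorem le_bondAt_pt_add_one (h : Stable τ α) (hx : pt x ∈ dom α) (hy : pt y ∈ dom α)
    (hxi : x ≤ i) (hiy : i < y) : τ ≤ bondAt α (pt i) (pt (i + 1)) := by
  obtain ⟨F, hF, hsum⟩ := h (dom α ∩ {p | p 0 ≤ i}) (dom α \ {p | p 0 ≤ i})
    ⟨pt x, hx, hxi⟩ ⟨pt y, hy, hiy.not_ge⟩ Set.disjoint_sdiff_inter.symm
    (Set.inter_union_sdiff _ _)
  have hzero : ∀ e ∈ F, e ≠ (pt i, pt (i + 1)) → bondAt α e.1 e.2 = 0 := by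
    rintro ⟨p, q⟩ he hne
    obtain ⟨a, rfl⟩ := exists_pt_eq p
    obtain ⟨b, rfl⟩ := exists_pt_eq q
    have hai : a ≤ i := (hF _ he).1.2
    have hib : ¬ b ≤ i := (hF _ he).2.2
    simp only [ne_eq, Prod.mk.injEq, pt_inj] at hne
    exact bondAt_pt_eq_zero α (by omega)
  calc τ ≤ ∑ e ∈ F, bondAt α e.1 e.2 := hsum
    _ ≤ ∑ e ∈ insert (pt i, pt (i + 1)) F, bondAt α e.1 e.2 :=
      Finset.sum_le_sum_of_subset (Finset.subset_insert _ _)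
    _ = bondAt α (pt i) (pt (i + 1)) :=
      Finset.sum_eq_single_of_mem _ (Finset.mem_insert_self _ _) fun e he hne =>
        hzero e (Finset.mem_of_mem_insert_of_ne he hne) hne

theorem exists_bindsEast (h : Stable τ α) (hτ : 0 < τ) (hx : pt x ∈ dom α) (hy : pt y ∈ dom α)
    (hxi : x ≤ i) (hiy : i < y) :
    ∃ t t', α (pt i) = some t ∧ α (pt (i + 1)) = some t' ∧ BindsEast τ t t' := by
  have hle := h.le_bondAt_pt_add_one hx hy hxi hiy
  obtain ⟨t, t', ht, ht'⟩ := exists_eq_some_of_bondAt_ne_zero (hτ.trans_le hle).ne'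
  rw [bondAt_of_eq_some ht ht', le_bond_pt_add_one_iff hτ] at hle
  exact ⟨t, t', ht, ht', hle⟩

theorem pt_mem_dom_of_le_of_le (h : Stable τ α) (hτ : 0 < τ) (hx : pt x ∈ dom α)
    (hy : pt y ∈ dom α) (hxi : x ≤ i) (hiy : i ≤ y) : pt i ∈ dom α := by
  obtain rfl | hiy := hiy.eq_or_lt
  · exact hy
  · obtain ⟨t, -, ht, -⟩ := h.exists_bindsEast hτ hx hy hxi hiy
    exact mem_dom.2 ⟨t, ht⟩

end Stable

end OneDimensional

section Pumping

variable {T : TAS 1}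

theorem exists_pt_mem_dom_seed (T : TAS 1) : ∃ s, pt s ∈ dom T.seed := by
  obtain ⟨p, hp⟩ := T.seed_nonempty
  obtain ⟨s, rfl⟩ := exists_pt_eq p
  exact ⟨s, hp⟩

/-- The assembly `α` is finitely producible in `T`, and its easternmost tile has type `t` and
position `i`. -/
structure HasEastTip (T : TAS 1) (α : Config 1) (i : ℤ) (t : TileType 1) : Prop where
  finitelyProduces : FinitelyProduces T T.seed α
  apply_pt : α (pt i) = some t
  le_of_mem_dom : ∀ q, pt q ∈ dom α → q ≤ i

theorem HasEastTip.update_some {α : Config 1} {i : ℤ} {t t' : TileType 1}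
    (h : HasEastTip T α i t) (ht' : t' ∈ T.tileset) (hbinds : BindsEast T.temp t t') :
    HasEastTip T (Function.update α (pt (i + 1)) (some t')) (i + 1) t' := by
  have hempty : pt (i + 1) ∉ dom α := fun hmem => by have := h.le_of_mem_dom _ hmem; omega
  refine ⟨h.finitelyProduces.tail ⟨_, t', hempty, ht', rfl, ?_⟩, Function.update_self .., ?_⟩
  · exact h.finitelyProduces.stable.update_some h.apply_pt hempty
      ((le_bond_pt_add_one_iff T.temp_pos).2 hbinds)
  · intro q hq
    rw [dom_update_some, Set.mem_insert_iff, pt_inj] at hq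
    rcases hq with rfl | hq
    · exact le_rfl
    · exact (h.le_of_mem_dom q hq).trans (by omega)

/-- East of the seed an assembly is filled from west to east, so a tile there is easternmost at the
moment it attaches. -/
theorem FinitelyProduces.exists_hasEastTip {γ : Config 1} {i : ℤ} {t : TileType 1}
    (h : FinitelyProduces T T.seed γ) (hseed : ∀ q, pt q ∈ dom T.seed → q < i)
    (ht : γ (pt i) = some t) : ∃ α, HasEastTip T α i t := by
  induction h with
  | refl => exact absurd (hseed i (mem_dom.2 ⟨t, ht⟩)) (lt_irrefl i)
  | @tail β γ hβ hattach ih =>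
    have hβ : FinitelyProduces T T.seed β := hβ
    by_cases hi : pt i ∈ dom β
    · obtain ⟨t', ht'⟩ := mem_dom.1 hi
      rw [← ht, extends_of_attach hattach _ _ ht'] at ih
      exact ih ht'
    · refine ⟨γ, hβ.tail hattach, ht, fun q hq => ?_⟩
      obtain ⟨p, t', -, -, rfl, -⟩ := hattach
      obtain rfl : pt i = p := by
        by_contra hip
        rw [Function.update_of_ne hip] at ht
        exact hi (mem_dom.2 ⟨t, ht⟩)
      rw [dom_update_some, Set.mem_insert_iff, pt_inj] at hq
      rcases hq with rfl | hq
      · exact le_rfl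
      · by_contra! hiq
        obtain ⟨s, hs⟩ := exists_pt_mem_dom_seed T
        exact hi (hβ.stable.pt_mem_dom_of_le_of_le T.temp_pos (hβ.subassembly.dom_subset hs) hq
          (hseed s hs).le hiq.le)

theorem HasEastTip.exists_of_le {Q : Set (TileType 1)}
    (hQ : ∀ t ∈ Q, ∃ t' ∈ Q, t' ∈ T.tileset ∧ BindsEast T.temp t t') {α : Config 1} {i j : ℤ}
    {t : TileType 1} (h : HasEastTip T α i t) (ht : t ∈ Q) (hij : i ≤ j) :
    ∃ β, ∃ t' ∈ Q, HasEastTip T β j t' := by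
  induction j, hij using Int.leInduction with
  | base => exact ⟨α, t, ht, h⟩
  | succ j _ ih =>
    obtain ⟨β, t', ht', hβ⟩ := ih
    obtain ⟨t'', ht'', hmem, hbinds⟩ := hQ t' ht'
    exact ⟨_, t'', ht'', hβ.update_some hmem hbinds⟩

theorem exists_lt_apply_pt_eq {U : Finset (TileType 1)} {γ : Config 1} {L : ℤ}
    (hγ : ∀ i, L ≤ i → i ≤ L + U.card → ∃ t ∈ U, γ (pt i) = some t) :
    ∃ a b, L ≤ a ∧ a < b ∧ b ≤ L + U.card ∧ γ (pt a) = γ (pt b) := by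
  obtain ⟨a, ha, b, hb, hab, heq⟩ :=
    Finset.exists_ne_map_eq_of_card_lt_of_maps_to (s := Finset.Icc L (L + U.card))
      (t := U.map Function.Embedding.some) (f := fun i => γ (pt i))
      (by rw [Finset.card_map, Int.card_Icc]; omega)
      (by
        intro i hi
        rw [Finset.mem_coe, Finset.mem_Icc] at hi
        obtain ⟨t, htU, ht⟩ := hγ i hi.1 hi.2
        exact Finset.mem_map.2 ⟨t, htU, ht.symm⟩)
  rw [Finset.mem_Icc] at ha hb
  rcases hab.lt_or_gt with hlt | hlt
  · exact ⟨a, b, ha.1, hlt, hb.2, heq⟩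
  · exact ⟨b, a, hb.1, hlt, ha.2, heq.symm⟩

/-- If positions `a < b` carry the same tile type, the types found on `[L, b)` are closed under
taking a suitable eastern neighbour: the neighbour of position `b - 1` also sits at position `a`. -/
theorem FinitelyProduces.exists_hasEastTip_of_card_le {γ : Config 1} {L y : ℤ}
    (h : FinitelyProduces T T.seed γ) (hseed : ∀ q, pt q ∈ dom T.seed → q < L)
    (hy : pt y ∈ dom γ) (hLy : L + T.tileset.card ≤ y) {M : ℤ} (hLM : L ≤ M) :
    ∃ α t, HasEastTip T α M t := by
  obtain ⟨s, hs⟩ := exists_pt_mem_dom_seed T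
  have hsL := hseed s hs
  have hsγ := h.subassembly.dom_subset hs
  have hfilled : ∀ i, L ≤ i → i ≤ L + T.tileset.card → ∃ t ∈ T.tileset, γ (pt i) = some t := by
    intro i hLi hi
    obtain ⟨t, ht⟩ := mem_dom.1 <|
      h.stable.pt_mem_dom_of_le_of_le (i := i) T.temp_pos hsγ hy (by omega) (by omega)
    exact ⟨t, h.mem_tileset ht, ht⟩
  obtain ⟨a, b, hLa, hab, hb, heq⟩ := exists_lt_apply_pt_eq hfilled
  set Q : Set (TileType 1) := {t | ∃ i, L ≤ i ∧ i < b ∧ γ (pt i) = some t}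
  have hQ : ∀ t ∈ Q, ∃ t' ∈ Q, t' ∈ T.tileset ∧ BindsEast T.temp t t' := by
    rintro t ⟨i, hLi, hib, hti⟩
    obtain ⟨t₁, t', ht₁, ht', hbinds⟩ :=
      h.stable.exists_bindsEast (i := i) T.temp_pos hsγ hy (by omega) (by omega)
    obtain rfl : t = t₁ := Option.some_inj.1 (hti.symm.trans ht₁)
    refine ⟨t', ?_, h.mem_tileset ht', hbinds⟩
    obtain hlt | rfl : i + 1 < b ∨ i + 1 = b := by omega
    · exact ⟨i + 1, by omega, hlt, ht'⟩
    · exact ⟨a, hLa, hab, heq.trans ht'⟩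
  obtain ⟨t₀, -, ht₀⟩ := hfilled L le_rfl (by omega)
  obtain ⟨α₀, hα₀⟩ := h.exists_hasEastTip hseed ht₀
  obtain ⟨α, t, -, hα⟩ := hα₀.exists_of_le hQ ⟨L, le_rfl, by omega, ht₀⟩ hLM
  exact ⟨α, t, hα⟩

end Pumping

section Simulation

variable {R : RepFn 1} {m : ℕ}

theorem MapsCleanly.le_add_one {α : Config 1} (h : MapsCleanly R m α)
    (hR : R (fun _ => none) = none) (hne : (dom (repStar R m α)).Nonempty) {b : ℤ}
    (hb : ∀ x, pt x ∈ dom (repStar R m α) → x ≤ b) {x : ℤ} (hx : NonemptyBlock m α (pt x)) :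
    x ≤ b + 1 := by
  rcases h with h | ⟨x₀, h⟩
  · rcases h _ hx with hmem | ⟨u, hadj, hmem⟩
    · exact (hb x hmem).trans (by omega)
    · obtain ⟨z, rfl⟩ := exists_pt_eq u
      have hxz := le_of_abs_le (adj_pt_iff.1 hadj).le
      have hzb := hb z hmem
      omega
  · obtain ⟨u, hu⟩ := hne
    obtain ⟨z, rfl⟩ := exists_pt_eq u
    have hzx : pt x = pt z := (h _ hx).trans (h _ (nonemptyBlock_of_mem_dom_repStar hR hu)).symm
    exact (hb x (hzx ▸ hu)).trans (by omega)

theorem MapsCleanly.lt_mul_of_mem_dom {α : Config 1} (h : MapsCleanly R m α) (hm : 0 < m)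
    (hR : R (fun _ => none) = none) (hne : (dom (repStar R m α)).Nonempty) {b : ℤ}
    (hb : ∀ x, pt x ∈ dom (repStar R m α) → x ≤ b) {q : ℤ} (hq : pt q ∈ dom α) :
    q < (b + 2) * m := by
  have hle := h.le_add_one hR hne hb ((nonemptyBlock_pt_iff hm).2 ⟨q, hq, rfl⟩)
  exact (Int.ediv_lt_iff_lt_mul (by exact_mod_cast hm)).1 (by omega)

theorem Simulates.exists_lt_mem_dom {S T : TAS 1} (h : Simulates S T R m) (hm : 0 < m)
    (hR : ValidRep T.tileset R) {b : ℤ} (hb : ∀ q, pt q ∈ dom T.seed → q ≤ b) {α : Config 1}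
    (hα : ProducesFrom (Attach T) T.seed α) {x : ℤ} (hx : pt x ∈ dom α)
    (hbx : b + 2 + S.tileset.card ≤ x) (M : ℤ) :
    ∃ β q, ProducesFrom (Attach T) T.seed β ∧ pt q ∈ dom β ∧ M < q := by
  by_contra! hbounded
  have hseed := h.repStar_seed hR
  have hempty := h.apply_empty_eq_none hR fun hmem => (hb (b + 1) hmem).not_gt (lt_add_one b)
  have hseedS : ∀ q, pt q ∈ dom S.seed → q < (b + 2) * m := fun q =>
    (h.clean _ (producesFrom_refl S _)).lt_mul_of_mem_dom hm hempty
      (hseed ▸ T.seed_nonempty) (hseed ▸ hb)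
  obtain ⟨α', hα', rfl⟩ := (h.prod_eq α).1 hα
  obtain ⟨y, hy, rfl⟩ := (nonemptyBlock_pt_iff hm).1 (nonemptyBlock_of_mem_dom_repStar hempty hx)
  obtain ⟨t, ht⟩ := mem_dom.1 hy
  obtain ⟨γ, hγ, hγt⟩ := hα'.exists_finitelyProduces ht
  have hlong : (b + 2) * m + S.tileset.card ≤ y := by
    have hmul := (Int.le_ediv_iff_mul_le (by exact_mod_cast hm)).1 hbx
    have hcard : (S.tileset.card : ℤ) ≤ S.tileset.card * m :=
      le_mul_of_one_le_right (Nat.cast_nonneg _) (by exact_mod_cast hm)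
    linarith
  obtain ⟨β, t', hβ⟩ := hγ.exists_hasEastTip_of_card_le hseedS (mem_dom.2 ⟨t, hγt⟩) hlong
    (le_max_left _ ((M + 2) * m))
  have hβprod := hβ.finitelyProduces.producesFrom
  have hβrep := (h.prod_eq _).2 ⟨β, hβprod, rfl⟩
  have hlt := (h.clean β hβprod).lt_mul_of_mem_dom hm hempty
    (T.seed_nonempty.mono hβrep.subassembly.dom_subset) (fun q => hbounded _ q hβrep)
    (mem_dom.2 ⟨t', hβ.apply_pt⟩)
  exact absurd (le_max_right _ _) hlt.not_ge

end Simulation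

section Line

/-- The `k`-th tile type of a one-dimensional line. Its place in the line is recorded in the
strengths of its glues, `k` on the west face and `k + 1` on the east face, all labels being equal;
at temperature one it binds exactly between the `(k - 1)`-st and the `(k + 1)`-st tile. -/
def lineTile (k : ℕ) : TileType 1 := fun _ => ((default, k + 1), (default, k))

theorem lineTile_injective : Function.Injective lineTile := fun j k h => by
  simpa [lineTile] using congrFun h 0

theorem bindsEast_lineTile_iff {j k : ℕ} : BindsEast 1 (lineTile j) (lineTile k) ↔ k = j + 1 := by
  simp [BindsEast, lineTile, eq_comm]

/-- The configuration consisting of a single `lineTile 0` at the origin. -/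
def lineSeed : Config 1 := Function.update (fun _ => none) (pt 0) (some (lineTile 0))

theorem lineSeed_zero : lineSeed (pt 0) = some (lineTile 0) := Function.update_self ..

theorem dom_lineSeed : dom lineSeed = {pt 0} := by
  rw [lineSeed, dom_update_some]
  simp [dom]

/-- The temperature-one system that grows the line `lineTile 0, …, lineTile n` eastwards from the
origin and then stops. -/
def lineTAS (n : ℕ) : TAS 1 where
  tileset := (Finset.range (n + 1)).image lineTile
  seed := lineSeed
  temp := 1
  temp_pos := one_pos
  seed_nonempty := dom_lineSeed ▸ Set.singleton_nonempty _
  seed_connected := by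
    rw [dom_lineSeed]
    rintro p rfl q rfl
    exact .refl
  seed_finite := dom_lineSeed ▸ Set.finite_singleton _
  seed_tiles := by
    intro p t h
    obtain rfl : p = pt 0 := by simpa [dom_lineSeed] using mem_dom.2 ⟨t, h⟩
    rw [lineSeed_zero, Option.some_inj] at h
    exact h ▸ Finset.mem_image_of_mem _ (by simp)
  seed_stable := stable_of_subsingleton_dom (dom_lineSeed ▸ Set.subsingleton_singleton) 1

variable {n : ℕ}

theorem mem_tileset_lineTAS {t : TileType 1} :
    t ∈ (lineTAS n).tileset ↔ ∃ k ≤ n, lineTile k = t := by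
  simp [lineTAS]

theorem le_zero_of_mem_dom_seed_lineTAS {q : ℤ} (hq : pt q ∈ dom (lineTAS n).seed) : q ≤ 0 := by
  have hq' : pt q ∈ dom lineSeed := hq
  rw [dom_lineSeed, Set.mem_singleton_iff, pt_inj] at hq'
  exact hq'.le

theorem exists_hasEastTip_lineTAS {k : ℕ} (hk : k ≤ n) :
    ∃ α, HasEastTip (lineTAS n) α k (lineTile k) := by
  induction k with
  | zero =>
    exact ⟨lineSeed, .refl, lineSeed_zero, fun _ => le_zero_of_mem_dom_seed_lineTAS (n := n)⟩
  | succ k ih =>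
    obtain ⟨α, hα⟩ := ih (by omega)
    exact ⟨_, hα.update_some (mem_tileset_lineTAS.2 ⟨k + 1, hk, rfl⟩)
      (bindsEast_lineTile_iff.2 rfl)⟩

theorem FinitelyProduces.apply_pt_natCast_of_lineTAS {α : Config 1}
    (h : FinitelyProduces (lineTAS n) lineSeed α) {k : ℕ} (hk : pt k ∈ dom α) :
    α (pt k) = some (lineTile k) := by
  have hzero : α (pt 0) = some (lineTile 0) := h.subassembly _ _ lineSeed_zero
  induction k with
  | zero => exact hzero
  | succ k ih =>
    obtain ⟨t, t', ht, ht', hbinds⟩ := Stable.exists_bindsEast (τ := 1) (i := k) h.stable one_pos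
      (mem_dom.2 ⟨_, hzero⟩) hk (by omega) (by omega)
    obtain rfl := Option.some_inj.1 (ht.symm.trans (ih (mem_dom.2 ⟨t, ht⟩)))
    obtain ⟨j, -, rfl⟩ := mem_tileset_lineTAS.1 (h.mem_tileset ht')
    obtain rfl := bindsEast_lineTile_iff.1 hbinds
    exact ht'

theorem le_of_mem_dom_of_producesFrom_lineTAS {α : Config 1}
    (h : ProducesFrom (Attach (lineTAS n)) (lineTAS n).seed α) {q : ℤ} (hq : pt q ∈ dom α) :
    q ≤ n := by
  obtain ⟨t, ht⟩ := mem_dom.1 hq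
  obtain ⟨γ, hγ, hγt⟩ := h.exists_finitelyProduces ht
  by_contra! hnq
  lift q to ℕ using by omega
  obtain ⟨k, hk, rfl⟩ := mem_tileset_lineTAS.1 (hγ.mem_tileset hγt)
  have htile := hγ.apply_pt_natCast_of_lineTAS (mem_dom.2 ⟨_, hγt⟩)
  obtain rfl := lineTile_injective (Option.some_inj.1 (hγt.symm.trans htile))
  omega

end Line

end ATAM

theorem oneD_aTAM_not_intrinsically_universal_general (n : ℕ) :
    ∃ T : TAS 1, ∀ (S : TAS 1) (R : RepFn 1) (m : ℕ), S.tileset.card ≤ n → 0 < m →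
      ValidRep T.tileset R → ¬ Simulates S T R m := by
  refine ⟨lineTAS (n + 2), fun S R m hn hm hR hsim => ?_⟩
  obtain ⟨α, hα⟩ := exists_hasEastTip_lineTAS (le_refl (n + 2))
  obtain ⟨β, q, hβ, hq, hlt⟩ := hsim.exists_lt_mem_dom hm hR (b := 0)
    (fun _ => le_zero_of_mem_dom_seed_lineTAS) hα.finitelyProduces.producesFrom
    (mem_dom.2 ⟨_, hα.apply_pt⟩) (by push_cast; omega) ((n + 2 : ℕ) : ℤ)
  exact absurd (le_of_mem_dom_of_producesFrom_lineTAS hβ hq) hlt.not_ge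

/-- **The 1D aTAM is not intrinsically universal.** There is no tile set `U`
of 1-dimensional tile types, temperature `τ' ∈ ℤ⁺`, and functions `Rfun` and
`Sfun` such that for every 1D aTAM system `T` there is `m` for which
`UT = (U, Sfun T, τ')` simulates `T` at scale `m` under `Rfun T`. -/
theorem oneD_aTAM_not_intrinsically_universal :
    ¬ ∃ (U : Finset (TileType 1)) (τ' : ℕ), 0 < τ' ∧
        ∃ (Rfun : TAS 1 → RepFn 1) (Sfun : TAS 1 → Config 1),
          ∀ T : TAS 1, ∃ (UT : TAS 1) (m : ℕ), 0 < m ∧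
            UT.tileset = U ∧ UT.seed = Sfun T ∧ UT.temp = τ' ∧
            ValidRep T.tileset (Rfun T) ∧ Simulates UT T (Rfun T) m := by
  rintro ⟨U, _, -, Rfun, _, h⟩
  obtain ⟨T, hT⟩ := oneD_aTAM_not_intrinsically_universal_general U.card
  obtain ⟨S, m, hm, hU, -, -, hR, hsim⟩ := h T
  exact hT S (Rfun T) m (hU ▸ le_rfl) hm hR hsim
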